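/- arXiv:1911.11031 — 6 statements merged into one kernel-verified Lean document; each statement's English description precedes it below -/
import Mathlib

section
/- For every integer d ≥ 1 and every real number k, the integral ∫_{-1}^{1} (1 - z)·((k+1) + (k-1)z)^d dz equals (2^{d+2}/((d+1)(d+2))) · Σ_{j=0}^{d} (d+1-j)·k^j. -/
/-!
Put `u = (k + 1) + (k - 1) z`, which runs from `2` to `2 k`. For `k ≠ 1`, integrating by parts twice
gives `(d + 1) (d + 2) (k - 1) ^ 2 * ∫ = 2 ^ (d + 2) * (k ^ (d + 2) - 1 - (d + 2) (k - 1))`, and the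
last factor is `(k - 1) ^ 2` times the sum on the right-hand side (`sq_mul_weighted_geom_sum`).
For `k = 1` the integrand is `(1 - z) * 2 ^ d` and the sum is triangular.
-/

/-- Passing from `n` to `n + 1` adds one to each weight, hence adds a plain geometric sum. -/
lemma weighted_geom_sum_succ (n : ℕ) (k : ℝ) :
    ∑ j ∈ Finset.range (n + 1), (((n + 1 : ℕ) : ℝ) - (j : ℝ)) * k ^ j =
      ∑ j ∈ Finset.range n, ((n : ℝ) - (j : ℝ)) * k ^ j + ∑ j ∈ Finset.range (n + 1), k ^ j := by
  have h : ∑ j ∈ Finset.range n, ((n : ℝ) - (j : ℝ)) * k ^ j =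
      ∑ j ∈ Finset.range (n + 1), ((n : ℝ) - (j : ℝ)) * k ^ j := by
    simp [Finset.sum_range_succ]
  rw [h, ← Finset.sum_add_distrib]
  refine Finset.sum_congr rfl fun j _ => ?_
  push_cast
  ring

lemma sq_mul_weighted_geom_sum (n : ℕ) (k : ℝ) :
    (k - 1) ^ 2 * ∑ j ∈ Finset.range n, ((n : ℝ) - (j : ℝ)) * k ^ j =
      k ^ (n + 1) - 1 - ((n : ℝ) + 1) * (k - 1) := by
  induction n with
  | zero => simp
  | succ n ih =>
    rw [weighted_geom_sum_succ, mul_add, ih]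
    have hg := geom_sum_mul k (n + 1)
    push_cast
    linear_combination (k - 1) * hg

lemma weighted_geom_sum_one (n : ℕ) :
    ∑ j ∈ Finset.range n, ((n : ℝ) - (j : ℝ)) * (1 : ℝ) ^ j = (n : ℝ) * ((n : ℝ) + 1) / 2 := by
  induction n with
  | zero => simp
  | succ n ih =>
    rw [weighted_geom_sum_succ, ih]
    simp
    ring

/-- For an integer `d ≥ 1` and a real `k`, the integral
`∫_{-1}^{1} (1 - z)·((k+1) + (k-1)z)^d dz` equals
`(2^{d+2}/((d+1)(d+2))) · Σ_{j=0}^{d} (d+1-j)·k^j`. -/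
theorem stmt_0 (d : ℕ) (hd : 1 ≤ d) (k : ℝ) :
    ∫ z in (-1:ℝ)..1, (1 - z) * ((k + 1) + (k - 1) * z) ^ d =
      (2 ^ (d + 2) / (((d : ℝ) + 1) * ((d : ℝ) + 2))) *
        ∑ j ∈ Finset.range (d + 1), ((d : ℝ) + 1 - (j : ℝ)) * k ^ j := by
  have h1 : (d : ℝ) + 1 ≠ 0 := by positivity
  have h2 : (d : ℝ) + 2 ≠ 0 := by positivity
  by_cases hk : k = 1
  · subst hk
    have hs := weighted_geom_sum_one (d + 1)
    push_cast at hs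
    have hder : ∀ z ∈ Set.uIcc (-1 : ℝ) 1, HasDerivAt
        (fun z : ℝ => (z - z ^ 2 / 2) * 2 ^ d)
        ((1 - z) * ((1 + 1) + (1 - 1) * z) ^ d) z := by
      intro z _
      refine HasDerivAt.congr_deriv (((hasDerivAt_id' z).sub
        ((hasDerivAt_pow 2 z).div_const 2)).mul_const ((2 : ℝ) ^ d)) ?_
      norm_num
    rw [hs, intervalIntegral.integral_eq_sub_of_hasDerivAt hder
      (Continuous.intervalIntegrable (by fun_prop) _ _)]
    field_simp
    ring
  · have ha : k - 1 ≠ 0 := sub_ne_zero.mpr hk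
    have hs := sq_mul_weighted_geom_sum (d + 1) k
    push_cast at hs
    have hder : ∀ z ∈ Set.uIcc (-1 : ℝ) 1, HasDerivAt
        (fun z : ℝ => (1 - z) * ((k + 1) + (k - 1) * z) ^ (d + 1) / (((d : ℝ) + 1) * (k - 1)) +
          ((k + 1) + (k - 1) * z) ^ (d + 2) / (((d : ℝ) + 1) * ((d : ℝ) + 2) * (k - 1) ^ 2))
        ((1 - z) * ((k + 1) + (k - 1) * z) ^ d) z := by
      intro z _
      have hu : HasDerivAt (fun z : ℝ => (k + 1) + (k - 1) * z) (k - 1) z := by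
        simpa using ((hasDerivAt_id' z).const_mul (k - 1)).const_add (k + 1)
      have hv : HasDerivAt (fun z : ℝ => 1 - z) (-1) z := (hasDerivAt_id' z).const_sub 1
      refine HasDerivAt.congr_deriv
        (((hv.mul (hu.pow (d + 1))).div_const (((d : ℝ) + 1) * (k - 1))).add
          ((hu.pow (d + 2)).div_const (((d : ℝ) + 1) * ((d : ℝ) + 2) * (k - 1) ^ 2))) ?_
      have e1 : d + 1 - 1 = d := rfl
      have e2 : d + 2 - 1 = d + 1 := rfl
      simp only [e1, e2, Pi.pow_apply]
      push_cast
      field_simp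
      ring
    rw [intervalIntegral.integral_eq_sub_of_hasDerivAt hder
      (Continuous.intervalIntegrable (by fun_prop) _ _)]
    have hS : ∑ j ∈ Finset.range (d + 1), ((d : ℝ) + 1 - (j : ℝ)) * k ^ j =
        (k ^ (d + 2) - 1 - ((d : ℝ) + 2) * (k - 1)) / (k - 1) ^ 2 := by
      rw [eq_div_iff (pow_ne_zero 2 ha)]
      linear_combination hs
    have e1 : (k + 1) + (k - 1) * 1 = 2 * k := by ring
    have e2 : (k + 1) + (k - 1) * (-1) = 2 := by ring
    rw [hS, e1, e2, mul_pow]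
    field_simp
    ring
end

section
/- For every integer d ≥ 1 and every real number k, the integral ∫_{-1}^{1} (1 + z)·((k+1) + (k-1)z)^d dz equals (2^{d+2}/((d+1)(d+2))) · Σ_{j=0}^{d} (j+1)·k^j. -/
/-! Put `w(z) = (k+1) + (k-1)z`, so that `w - 2 = (k-1)(1+z)`, and
`I_d = ∫_{-1}^{1} (1+z) w^d`. Differentiating `(1+z)² w^(d+1)` gives
`(d+3) (1+z) w^(d+1) - 2(d+1) (1+z) w^d`, and integrating this over `[-1, 1]` yields
`(d+3) I_{d+1} - 2(d+1) I_d = 4 (2k)^(d+1)`.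
The right-hand side of the theorem satisfies the same recurrence, and both sides equal `2`
at `d = 0`. No division by `k - 1` occurs, so `k = 1` needs no separate treatment. -/

theorem integral_recurrence (d : ℕ) (k : ℝ) :
    ((d : ℝ) + 3) * (∫ z in (-1:ℝ)..1, (1 + z) * ((k + 1) + (k - 1) * z) ^ (d + 1)) =
      4 * (2 * k) ^ (d + 1) +
        2 * ((d : ℝ) + 1) * ∫ z in (-1:ℝ)..1, (1 + z) * ((k + 1) + (k - 1) * z) ^ d := by
  have hderiv : ∀ z ∈ Set.uIcc (-1:ℝ) 1,
      HasDerivAt (fun z : ℝ => (1 + z) ^ 2 * ((k + 1) + (k - 1) * z) ^ (d + 1))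
        (((d : ℝ) + 3) * ((1 + z) * ((k + 1) + (k - 1) * z) ^ (d + 1)) -
          2 * ((d : ℝ) + 1) * ((1 + z) * ((k + 1) + (k - 1) * z) ^ d)) z := by
    intro z _
    have hu : HasDerivAt (fun z : ℝ => 1 + z) 1 z := (hasDerivAt_id z).const_add 1
    have hw : HasDerivAt (fun z : ℝ => (k + 1) + (k - 1) * z) ((k - 1) * 1) z :=
      ((hasDerivAt_id z).const_mul (k - 1)).const_add (k + 1)
    refine ((hu.fun_pow 2).fun_mul (hw.fun_pow (d + 1))).congr_deriv ?_
    push_cast [Nat.add_sub_cancel]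
    ring
  have hcont : ∀ (c : ℝ) (n : ℕ), IntervalIntegrable
      (fun z : ℝ => c * ((1 + z) * ((k + 1) + (k - 1) * z) ^ n)) MeasureTheory.volume (-1) 1 :=
    fun c n => Continuous.intervalIntegrable (by fun_prop) _ _
  have hint := intervalIntegral.integral_eq_sub_of_hasDerivAt hderiv
    ((hcont _ (d + 1)).sub (hcont _ d))
  rw [intervalIntegral.integral_sub (hcont _ (d + 1)) (hcont _ d),
    intervalIntegral.integral_const_mul, intervalIntegral.integral_const_mul] at hint
  have hend : k + 1 + (k - 1) * 1 = 2 * k := by ring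
  rw [hend] at hint
  norm_num at hint
  linarith

/-- The formula also holds at `d = 0`, which is where the induction starts. -/
theorem integral_eq_sum (d : ℕ) (k : ℝ) :
    ∫ z in (-1:ℝ)..1, (1 + z) * ((k + 1) + (k - 1) * z) ^ d =
      (2 ^ (d + 2) / (((d : ℝ) + 1) * ((d : ℝ) + 2))) *
        ∑ j ∈ Finset.range (d + 1), ((j : ℝ) + 1) * k ^ j := by
  induction d with
  | zero =>
    have h : ∫ z in (-1:ℝ)..1, (1 + z) = 2 := by
      rw [intervalIntegral.integral_add (by simp) (by simp)]
      norm_num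
    norm_num [h]
  | succ d ih =>
    have hrec := integral_recurrence d k
    have h3 : (d : ℝ) + 3 ≠ 0 := by positivity
    apply mul_left_cancel₀ h3
    rw [hrec, ih, Finset.sum_range_succ _ (d + 1)]
    have h1 : (d : ℝ) + 1 ≠ 0 := by positivity
    have h2 : (d : ℝ) + 2 ≠ 0 := by positivity
    have e1 : ((d + 1 : ℕ) : ℝ) + 1 = d + 2 := by push_cast; ring
    have e2 : ((d + 1 : ℕ) : ℝ) + 2 = d + 3 := by push_cast; ring
    rw [e1, e2]
    field_simp
    ring

/-- For an integer `d ≥ 1` and a real `k`, the integral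
`∫_{-1}^{1} (1 + z)·((k+1) + (k-1)z)^d dz` equals
`(2^{d+2}/((d+1)(d+2))) · Σ_{j=0}^{d} (j+1)·k^j`. -/
theorem stmt_1 (d : ℕ) (hd : 1 ≤ d) (k : ℝ) :
    ∫ z in (-1:ℝ)..1, (1 + z) * ((k + 1) + (k - 1) * z) ^ d =
      (2 ^ (d + 2) / (((d : ℝ) + 1) * ((d : ℝ) + 2))) *
        ∑ j ∈ Finset.range (d + 1), ((j : ℝ) + 1) * k ^ j := by
  exact integral_eq_sum d k
end

section
/- Let d ≥ 1 be an integer and let w⁰ > w^∞ be relatively prime positive integers. Then the polynomial P_w(k) = w^∞·(d+1)·k^{d+1} + Σ_{j=0}^{d} ((w⁰+w^∞)·j - w⁰·(d+1))·k^j has exactly one real root k in the open interval (1, ∞). -/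
/-!
Put `s = w⁰(d+1)/(w⁰+w^∞)`, so `0 < s < d+1` and the coefficient of `k^j` for `j ≤ d` is
`(w⁰+w^∞)(j - s)`: it changes sign once, at the exponent `s`. Hence `k ↦ P(k)/k^s` is strictly
increasing on `(0, ∞)`, in the form `t^s P(x) < P(t x)` for `x > 0`, `t > 1`
(`rpow_mul_lt_of_one_lt`). So a positive root is unique. A root in `(1, ∞)` exists by the
intermediate value theorem, since `P(1) = (d+1)(d+2)(w^∞ - w⁰)/2 < 0` (`eval_one`) and
`P(w⁰(d+1)) ≥ 0` (`eval_large_nonneg`).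
-/

/-- Strict monotonicity of `P(k)/k^s`, where `s = a(d+1)/(a+b)`, stated without division: every
term obeys the weak inequality because `j - s` and `t^j - t^s` have the same sign, and the leading
term obeys it strictly. -/
lemma rpow_mul_lt_of_one_lt (d : ℕ) {a b x t : ℝ} (ha : 0 < a) (hb : 0 < b) (hx : 0 < x)
    (ht : 1 < t) :
    t ^ (a * ((d : ℝ) + 1) / (a + b)) * (b * ((d : ℝ) + 1) * x ^ (d + 1) +
      ∑ j ∈ Finset.range (d + 1), ((a + b) * (j : ℝ) - a * ((d : ℝ) + 1)) * x ^ j) <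
    b * ((d : ℝ) + 1) * (t * x) ^ (d + 1) +
      ∑ j ∈ Finset.range (d + 1), ((a + b) * (j : ℝ) - a * ((d : ℝ) + 1)) * (t * x) ^ j := by
  have hW : 0 < a + b := by positivity
  set s : ℝ := a * ((d : ℝ) + 1) / (a + b) with hs
  have hsW : a * ((d : ℝ) + 1) = (a + b) * s := by rw [hs]; field_simp
  have hsd : s < ((d + 1 : ℕ) : ℝ) := by
    rw [hs, div_lt_iff₀ hW]
    push_cast
    nlinarith [mul_pos hb (by positivity : (0 : ℝ) < (d : ℝ) + 1)]
  rw [mul_add, Finset.mul_sum]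
  apply add_lt_add_of_lt_of_le
  · have h : t ^ s < t ^ (d + 1) := by
      rw [← Real.rpow_natCast]
      exact Real.rpow_lt_rpow_of_exponent_lt ht hsd
    have hc : 0 < b * ((d : ℝ) + 1) * x ^ (d + 1) := by positivity
    rw [mul_pow]
    nlinarith [mul_lt_mul_of_pos_right h hc]
  · refine Finset.sum_le_sum fun j _ => ?_
    have h : 0 ≤ ((j : ℝ) - s) * (t ^ j - t ^ s) := by
      rw [← Real.rpow_natCast]
      rcases le_total (j : ℝ) s with hj | hj
      · exact mul_nonneg_of_nonpos_of_nonpos (sub_nonpos.2 hj)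
          (sub_nonpos.2 (Real.rpow_le_rpow_of_exponent_le ht.le hj))
      · exact mul_nonneg (sub_nonneg.2 hj)
          (sub_nonneg.2 (Real.rpow_le_rpow_of_exponent_le ht.le hj))
    have hc : 0 ≤ (a + b) * x ^ j := by positivity
    rw [mul_pow, hsW]
    nlinarith [mul_nonneg hc h]

lemma eval_one (d : ℕ) (a b : ℝ) :
    b * ((d : ℝ) + 1) * 1 ^ (d + 1) +
      ∑ j ∈ Finset.range (d + 1), ((a + b) * (j : ℝ) - a * ((d : ℝ) + 1)) * 1 ^ j =
    ((d : ℝ) + 1) * ((d : ℝ) + 2) * (b - a) / 2 := by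
  have hsum : ∑ j ∈ Finset.range (d + 1), (j : ℝ) = (d : ℝ) * ((d : ℝ) + 1) / 2 := by
    induction d with
    | zero => simp
    | succ n ih => rw [Finset.sum_range_succ, ih]; push_cast; ring
  simp only [one_pow, mul_one, Finset.sum_sub_distrib, ← Finset.mul_sum, hsum, Finset.sum_const,
    Finset.card_range, nsmul_eq_mul]
  push_cast
  ring

/-- Each of the `d+1` lower terms is at least `-a(d+1)k^d` for `k ≥ 1`, so at `k = a(d+1)` the
leading term dominates. -/
lemma eval_large_nonneg (d : ℕ) {a b : ℝ} (ha : 1 ≤ a) (hb : 1 ≤ b) :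
    0 ≤ b * ((d : ℝ) + 1) * (a * ((d : ℝ) + 1)) ^ (d + 1) +
      ∑ j ∈ Finset.range (d + 1),
        ((a + b) * (j : ℝ) - a * ((d : ℝ) + 1)) * (a * ((d : ℝ) + 1)) ^ j := by
  set k : ℝ := a * ((d : ℝ) + 1) with hk
  have hd : (0 : ℝ) ≤ d := Nat.cast_nonneg d
  have hk1 : 1 ≤ k := by rw [hk]; nlinarith
  have hlow : ∑ j ∈ Finset.range (d + 1), (-(k * k ^ d)) ≤
      ∑ j ∈ Finset.range (d + 1), ((a + b) * (j : ℝ) - k) * k ^ j := by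
    refine Finset.sum_le_sum fun j hj => ?_
    have hjd : k ^ j ≤ k ^ d :=
      pow_le_pow_right₀ hk1 (Nat.lt_succ_iff.1 (Finset.mem_range.1 hj))
    have h1 : 0 ≤ (a + b) * (j : ℝ) * k ^ j := by positivity
    nlinarith [mul_le_mul_of_nonneg_left hjd (by linarith : (0 : ℝ) ≤ k)]
  rw [Finset.sum_const, Finset.card_range, nsmul_eq_mul] at hlow
  push_cast at hlow
  have hlead : 0 ≤ (b - 1) * (((d : ℝ) + 1) * (k * k ^ d)) :=
    mul_nonneg (by linarith) (by positivity)
  rw [pow_succ']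
  nlinarith

/-- For `d ≥ 1` and relatively prime positive integers `w⁰ > w^∞`, the polynomial
`P_w(k) = w^∞·(d+1)·k^{d+1} + Σ_{j=0}^{d} ((w⁰+w^∞)·j - w⁰·(d+1))·k^j`
has exactly one real root in the open interval `(1, ∞)`. -/
theorem stmt_6 (d : ℕ) (hd : 1 ≤ d) (w0 winf : ℕ) (hw0 : 0 < w0) (hwinf : 0 < winf)
    (hlt : winf < w0) (hcop : Nat.gcd w0 winf = 1)
    (P : ℝ → ℝ)
    (hP : ∀ k : ℝ, P k = (winf : ℝ) * ((d : ℝ) + 1) * k ^ (d + 1) +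
      ∑ j ∈ Finset.range (d + 1),
        (((w0 : ℝ) + (winf : ℝ)) * (j : ℝ) - (w0 : ℝ) * ((d : ℝ) + 1)) * k ^ j) :
    ∃! k : ℝ, k ∈ Set.Ioi (1 : ℝ) ∧ P k = 0 := by
  have ha : (1 : ℝ) ≤ w0 := by exact_mod_cast hw0
  have hb : (1 : ℝ) ≤ winf := by exact_mod_cast hwinf
  have hab : (winf : ℝ) < w0 := by exact_mod_cast hlt
  have hdR : (0 : ℝ) ≤ d := Nat.cast_nonneg d
  have hP1 : P 1 < 0 := by
    rw [hP, eval_one]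
    have : 0 < ((d : ℝ) + 1) * ((d : ℝ) + 2) * ((w0 : ℝ) - winf) :=
      mul_pos (by positivity) (by linarith)
    linarith
  have hPK : 0 ≤ P ((w0 : ℝ) * ((d : ℝ) + 1)) := by
    rw [hP]
    exact eval_large_nonneg d ha hb
  have hcont : Continuous P := by
    rw [funext hP]
    fun_prop
  have hmono : ∀ x y : ℝ, 1 < x → x < y → P x = 0 → 0 < P y := by
    intro x y hx hxy h0
    have hx0 : 0 < x := by linarith
    have h := rpow_mul_lt_of_one_lt d (a := w0) (b := winf) (by linarith) (by linarith) hx0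
      ((one_lt_div hx0).2 hxy)
    rwa [div_mul_cancel₀ y hx0.ne', ← hP, ← hP, h0, mul_zero] at h
  obtain ⟨k, hk, hk0⟩ := intermediate_value_Icc
    (by nlinarith : (1 : ℝ) ≤ (w0 : ℝ) * ((d : ℝ) + 1)) hcont.continuousOn ⟨hP1.le, hPK⟩
  have hk1 : 1 < k := by
    refine lt_of_le_of_ne hk.1 ?_
    rintro rfl
    exact hP1.ne hk0
  refine ⟨k, ⟨hk1, hk0⟩, ?_⟩
  rintro y ⟨hy1, hy0⟩
  rcases lt_trichotomy y k with h | h | h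
  · exact absurd hk0 (hmono y k hy1 h hy0).ne'
  · exact h
  · exact absurd hy0 (hmono k y hk1 h hk0).ne'
end

section
/- Let d ≥ 1 be an integer, let q > 0 and p be real numbers, and define F(x,y) = Σ_{j=0}^{d} (d+1-j)·x^j·y^{d-j}. Then p⁻(p/q)·F(q,p) = p⁺(p/q)·F(p,q), where p⁻(k) = ∫_{-1}^{1} (1-z)((k+1)+(k-1)z)^d dz and p⁺(k) = ∫_{-1}^{1} (1+z)((k+1)+(k-1)z)^d dz. In particular, when p⁺(p/q) ≠ 0 and F(q,p) ≠ 0, p⁻(p/q)/p⁺(p/q) = F(p,q)/F(q,p). -/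
/-!
Put `k = p / q` and `w = (k+1) + (k-1) z`, so that `(k-1)(1-z) = 2k - w` and `(k-1)(1+z) = w - 2`.
Multiplying either integral by `(k-1)²` turns its integrand into the `z`-derivative of a polynomial
in `w`, and `w` runs from `2` to `2k`; likewise `(x-y)² F(x,y)` telescopes to
`x^(d+2) - (d+2) x y^(d+1) + (d+1) y^(d+2)`. Comparing the closed forms, both integrals are, with the
same factor, multiples of `F(p,q)` and `F(q,p)` when `p ≠ q`. When `p = q` the factor `(k-1)²`
vanishes, but then the two integrals agree by inspection.
-/

lemma sub_sq_mul_weighted_sum (d : ℕ) (x y : ℝ) :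
    (x - y) ^ 2 * ∑ j ∈ Finset.range (d + 1), ((d : ℝ) + 1 - (j : ℝ)) * x ^ j * y ^ (d - j) =
      x ^ (d + 2) - (d + 2) * x * y ^ (d + 1) + (d + 1) * y ^ (d + 2) := by
  induction d with
  | zero => simp; ring
  | succ d ih =>
    -- Splitting off `j = 0` leaves `x` times the sum for `d`.
    have step : ∑ j ∈ Finset.range (d + 1 + 1),
        (((d + 1 : ℕ) : ℝ) + 1 - (j : ℝ)) * x ^ j * y ^ (d + 1 - j) =
        x * (∑ j ∈ Finset.range (d + 1), ((d : ℝ) + 1 - (j : ℝ)) * x ^ j * y ^ (d - j)) +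
          (d + 2) * y ^ (d + 1) := by
      rw [Finset.sum_range_succ', Finset.mul_sum]
      congr 1
      · refine Finset.sum_congr rfl fun j _ => ?_
        rw [Nat.add_sub_add_right]
        push_cast
        ring
      · push_cast
        ring
    rw [step, mul_add, mul_left_comm, ih]
    push_cast
    ring

lemma hasDerivAt_affine_pow (k z : ℝ) (n : ℕ) :
    HasDerivAt (fun z : ℝ => ((k + 1) + (k - 1) * z) ^ (n + 1) / ((n : ℝ) + 1))
      ((k - 1) * ((k + 1) + (k - 1) * z) ^ n) z := by
  have h : HasDerivAt (fun z : ℝ => (k + 1) + (k - 1) * z) (k - 1) z := by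
    simpa using ((hasDerivAt_id z).const_mul (k - 1)).const_add (k + 1)
  have hn : (n : ℝ) + 1 ≠ 0 := by positivity
  refine ((h.pow (n + 1)).div_const ((n : ℝ) + 1)).congr_deriv ?_
  rw [Nat.add_sub_cancel]
  push_cast
  field_simp

lemma sub_one_sq_mul_integral_minus (d : ℕ) (k : ℝ) :
    (k - 1) ^ 2 * ∫ z in (-1:ℝ)..1, (1 - z) * ((k + 1) + (k - 1) * z) ^ d =
      2 ^ (d + 2) / ((d + 1) * (d + 2)) * (k ^ (d + 2) - (d + 2) * k + (d + 1)) := by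
  rw [← intervalIntegral.integral_const_mul,
    intervalIntegral.integral_eq_sub_of_hasDerivAt
      (f := fun z : ℝ => 2 * k * (((k + 1) + (k - 1) * z) ^ (d + 1) / ((d : ℝ) + 1)) -
        ((k + 1) + (k - 1) * z) ^ (d + 1 + 1) / (((d + 1 : ℕ) : ℝ) + 1))]
  · have e1 : (k + 1) + (k - 1) * 1 = 2 * k := by ring
    have e2 : (k + 1) + (k - 1) * -1 = 2 := by ring
    have h1 : (d : ℝ) + 1 ≠ 0 := by positivity
    have h2 : (d : ℝ) + 2 ≠ 0 := by positivity
    have e3 : ((d + 1 : ℕ) : ℝ) + 1 = d + 2 := by push_cast; ring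
    simp only [e1, e2, e3, mul_pow]
    field_simp
    ring
  · intro z _
    refine (((hasDerivAt_affine_pow k z d).const_mul (2 * k)).sub
      (hasDerivAt_affine_pow k z (d + 1))).congr_deriv ?_
    ring
  · exact Continuous.intervalIntegrable (by fun_prop) _ _

lemma sub_one_sq_mul_integral_plus (d : ℕ) (k : ℝ) :
    (k - 1) ^ 2 * ∫ z in (-1:ℝ)..1, (1 + z) * ((k + 1) + (k - 1) * z) ^ d =
      2 ^ (d + 2) / ((d + 1) * (d + 2)) *
        ((d + 1) * k ^ (d + 2) - (d + 2) * k ^ (d + 1) + 1) := by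
  rw [← intervalIntegral.integral_const_mul,
    intervalIntegral.integral_eq_sub_of_hasDerivAt
      (f := fun z : ℝ => ((k + 1) + (k - 1) * z) ^ (d + 1 + 1) / (((d + 1 : ℕ) : ℝ) + 1) -
        2 * (((k + 1) + (k - 1) * z) ^ (d + 1) / ((d : ℝ) + 1)))]
  · have e1 : (k + 1) + (k - 1) * 1 = 2 * k := by ring
    have e2 : (k + 1) + (k - 1) * -1 = 2 := by ring
    have h1 : (d : ℝ) + 1 ≠ 0 := by positivity
    have h2 : (d : ℝ) + 2 ≠ 0 := by positivity
    have e3 : ((d + 1 : ℕ) : ℝ) + 1 = d + 2 := by push_cast; ring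
    simp only [e1, e2, e3, mul_pow]
    field_simp
    ring
  · intro z _
    refine ((hasDerivAt_affine_pow k z (d + 1)).sub
      ((hasDerivAt_affine_pow k z d).const_mul 2)).congr_deriv ?_
    ring
  · exact Continuous.intervalIntegrable (by fun_prop) _ _

/-- With `F(x,y) = Σ_{j=0}^{d} (d+1-j)·x^j·y^{d-j}`,
`p⁻(k) = ∫_{-1}^{1} (1-z)((k+1)+(k-1)z)^d dz` and
`p⁺(k) = ∫_{-1}^{1} (1+z)((k+1)+(k-1)z)^d dz`, for `d ≥ 1`, real `p` and `q > 0`,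
`p⁻(p/q)·F(q,p) = p⁺(p/q)·F(p,q)`; in particular, when `p⁺(p/q) ≠ 0` and `F(q,p) ≠ 0`,
`p⁻(p/q)/p⁺(p/q) = F(p,q)/F(q,p)`. -/
theorem stmt_7 (d : ℕ) (hd : 1 ≤ d) (p q : ℝ) (hq : 0 < q)
    (F : ℝ → ℝ → ℝ)
    (hF : ∀ x y : ℝ, F x y = ∑ j ∈ Finset.range (d + 1),
      ((d : ℝ) + 1 - (j : ℝ)) * x ^ j * y ^ (d - j))
    (pminus pplus : ℝ → ℝ)
    (hpminus : ∀ k : ℝ, pminus k = ∫ z in (-1:ℝ)..1, (1 - z) * ((k + 1) + (k - 1) * z) ^ d)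
    (hpplus : ∀ k : ℝ, pplus k = ∫ z in (-1:ℝ)..1, (1 + z) * ((k + 1) + (k - 1) * z) ^ d) :
    pminus (p / q) * F q p = pplus (p / q) * F p q ∧
    (pplus (p / q) ≠ 0 → F q p ≠ 0 →
      pminus (p / q) / pplus (p / q) = F p q / F q p) := by
  have key : pminus (p / q) * F q p = pplus (p / q) * F p q := by
    have hq0 : q ≠ 0 := hq.ne'
    by_cases hpq : p = q
    · subst hpq
      congr 1
      rw [hpminus, hpplus, div_self hq0]
      -- The factor `w` is constant for `k = 1`, so the reflection `z ↦ -z` swaps the integrals.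
      have h := intervalIntegral.integral_comp_neg (a := -1) (b := 1)
        (fun z : ℝ => (1 + z) * ((1 + 1) + (1 - 1) * z) ^ d)
      simpa [← sub_eq_add_neg] using h
    · obtain ⟨k, rfl⟩ : ∃ k, p = k * q := ⟨p / q, by field_simp⟩
      have hk : k - 1 ≠ 0 := fun h => hpq (by rw [sub_eq_zero.mp h, one_mul])
      rw [mul_div_cancel_right₀ k hq0]
      have hm := sub_one_sq_mul_integral_minus d k
      have hp := sub_one_sq_mul_integral_plus d k
      have f1 := sub_sq_mul_weighted_sum d q (k * q)
      have f2 := sub_sq_mul_weighted_sum d (k * q) q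
      rw [← hpminus] at hm
      rw [← hpplus] at hp
      rw [← hF] at f1 f2
      have hc : (k - 1) ^ 2 * (k * q - q) ^ 2 ≠ 0 :=
        mul_ne_zero (pow_ne_zero 2 hk) (pow_ne_zero 2 (sub_ne_zero.mpr hpq))
      apply mul_left_cancel₀ hc
      calc (k - 1) ^ 2 * (k * q - q) ^ 2 * (pminus k * F q (k * q))
          = ((k - 1) ^ 2 * pminus k) * ((q - k * q) ^ 2 * F q (k * q)) := by ring
        _ = ((k - 1) ^ 2 * pplus k) * ((k * q - q) ^ 2 * F (k * q) q) := by
          rw [hm, hp, f1, f2]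
          ring
        _ = _ := by ring
  refine ⟨key, fun h1 h2 => ?_⟩
  rw [div_eq_div_iff h1 h2, key, mul_comm]
end

section
/- Let d ≥ 1 be an integer, let w⁰ > w^∞ be relatively prime positive integers, let l⁰ be a positive integer, and let A > 0 be a real number. With f(b) defined (as a function of the additional parameter l^∞) by f(b) = (w⁰)^{2(d+1)}·b^{2d+3}·(A·l^∞ + l⁰·(d+1)·w^∞ - b·(d+1)·l⁰·w⁰) - (w⁰)^{d+2}·(w^∞)^{d}·b^{d+3}·(d+1)·(A·(d+1)·l^∞ - l⁰·((d+1)·w⁰ + (d+2)·w^∞)) + (w⁰)^{d+1}·(w^∞)^{d+1}·b^{d+2}·(2·A·d·(d+2)·l^∞ - (d+1)·(2d+3)·l⁰·(w⁰ + w^∞)) - (w⁰)^{d}·(w^∞)^{d+2}·b^{d+1}·(d+1)·(A·(d+1)·l^∞ - l⁰·((d+2)·w⁰ + (d+1)·w^∞)) + (w^∞)^{2(d+1)}·(b·(A·l^∞ + l⁰·(d+1)·w⁰) - (d+1)·l⁰·w^∞), there exists a positive integer L such that for every integer l^∞ ≥ L, f has at least three distinct roots in (0, ∞). -/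
/-!
Put `n = d + 1` and `b = (w^∞ / w⁰) t`. Up to a positive factor, `f` becomes
`A l^∞ t G(t) + l⁰ n (w⁰ P(t) + w^∞ Q(t))`, where
`G(t) = (t ^ n - 1) ^ 2 - n ^ 2 t ^ (n - 1) (t - 1) ^ 2` vanishes to order four at `t = 1`, and
`P`, `Q` vanish there to order exactly three, with opposite leading coefficients `± n (n + 1) / 2`
(`cscG_factor`, `cscP_factor`, `cscQ_factor`).

Hence `t = 1` is always a root, and since `w⁰ > w^∞` the function is negative immediately to the
left of `1`, whatever `l^∞` is. It is also negative at `t = 0`. As `G 0 = 1`, some fixed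
`t₀ ∈ (0, 1)` has `G t₀ > 0`, so the function is positive at `t₀` once `l^∞` is large. The
intermediate value theorem gives one root in `(0, t₀)` and another in `(t₀, 1)`.
-/

/-- The coefficient of `A l^∞ t` in the rescaled polynomial, with `n = d + 1`. -/
def cscG (d : ℕ) (t : ℝ) : ℝ :=
  (t ^ (d + 1) - 1) ^ 2 - ((d : ℝ) + 1) ^ 2 * t ^ d * (t - 1) ^ 2

/-- The coefficient of `l⁰ n w⁰` in the rescaled polynomial; here the index is `n = d + 1`. -/
def cscP (n : ℕ) (t : ℝ) : ℝ :=
  n * t ^ (n + 2) - (2 * n + 1) * t ^ (n + 1) + (n + 1) * t ^ n + t - 1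

/-- The coefficient of `l⁰ n w^∞` in the rescaled polynomial; here the index is `n = d + 1`.
For `t ≠ 0` it equals `t ^ (2 n + 2) P(1 / t)`. -/
def cscQ (n : ℕ) (t : ℝ) : ℝ :=
  (n + 1) * t ^ (n + 2) - (2 * n + 1) * t ^ (n + 1) + n * t ^ n + t ^ (2 * n + 1) - t ^ (2 * n + 2)

lemma geom_factor (n : ℕ) : ∃ S : ℝ → ℝ, Continuous S ∧ S 1 = n ∧
    ∀ t, t ^ n - 1 = (t - 1) * S t := by
  induction n with
  | zero => exact ⟨fun _ => 0, by fun_prop, by simp, by simp⟩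
  | succ n ih =>
    obtain ⟨S, hS, h1, h⟩ := ih
    refine ⟨fun t => t * S t + 1, by fun_prop, by simp [h1], fun t => ?_⟩
    linear_combination t * h t

/-- The expansion of `Σ_{i<n} t ^ i` to first order at `1`, in product form. -/
lemma geom_factor_two (n : ℕ) : ∃ V : ℝ → ℝ, Continuous V ∧ V 1 = n * (n - 1) / 2 ∧
    ∀ t, t ^ n - 1 = (t - 1) * (n + (t - 1) * V t) := by
  induction n with
  | zero => exact ⟨fun _ => 0, by fun_prop, by simp, by simp⟩
  | succ n ih =>
    obtain ⟨V, hV, h1, h⟩ := ih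
    refine ⟨fun t => t * V t + n, by fun_prop, ?_, fun t => ?_⟩
    · simp only [h1]; push_cast; ring
    · push_cast; linear_combination t * h t

/-- `G` vanishes to order at least four at `1`, expressed as `W 1 = 0`. -/
lemma cscG_factor (d : ℕ) : ∃ W : ℝ → ℝ, Continuous W ∧ W 1 = 0 ∧
    ∀ t, cscG d t = (t - 1) ^ 3 * W t := by
  obtain ⟨S, hS, hS1, hSt⟩ := geom_factor d
  obtain ⟨V, hV, hV1, hVt⟩ := geom_factor_two (d + 1)
  refine ⟨fun t => V t * (2 * ((d : ℝ) + 1) + (t - 1) * V t) - ((d : ℝ) + 1) ^ 2 * S t,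
    by fun_prop, ?_, fun t => ?_⟩
  · simp only [hS1, hV1]; push_cast; ring
  · have h1 := hSt t
    have h2 := hVt t
    push_cast at h2
    rw [cscG, h2, sub_eq_iff_eq_add.mp h1]
    ring

/-- The recursion `P_{n+1} - t P_n = (t - 1) ^ 2 (t ^ (n + 1) - 1)` gives the triple zero of `P`
at `1`. -/
lemma cscP_factor (n : ℕ) : ∃ W : ℝ → ℝ, Continuous W ∧ W 1 = n * (n + 1) / 2 ∧
    ∀ t, cscP n t = (t - 1) ^ 3 * W t := by
  induction n with
  | zero => exact ⟨fun _ => 0, by fun_prop, by simp, by simp [cscP]⟩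
  | succ n ih =>
    obtain ⟨W, hW, h1, h⟩ := ih
    obtain ⟨S, hS, hS1, hSt⟩ := geom_factor (n + 1)
    refine ⟨fun t => t * W t + S t, by fun_prop, ?_, fun t => ?_⟩
    · simp only [h1, hS1]; push_cast; ring
    · have := h t
      simp only [cscP] at this ⊢
      push_cast
      linear_combination t * this + (t - 1) ^ 2 * hSt t

/-- The recursion `Q_{n+1} - t Q_n = - t ^ (n + 1) (t - 1) ^ 2 (t ^ (n + 1) - 1)` gives the triple
zero of `Q` at `1`. -/
lemma cscQ_factor (n : ℕ) : ∃ W : ℝ → ℝ, Continuous W ∧ W 1 = -(n * (n + 1) / 2) ∧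
    ∀ t, cscQ n t = (t - 1) ^ 3 * W t := by
  induction n with
  | zero => exact ⟨fun _ => 0, by fun_prop, by simp, fun t => by simp [cscQ]⟩
  | succ n ih =>
    obtain ⟨W, hW, h1, h⟩ := ih
    obtain ⟨S, hS, hS1, hSt⟩ := geom_factor (n + 1)
    refine ⟨fun t => t * W t - t ^ (n + 1) * S t, by fun_prop, ?_, fun t => ?_⟩
    · simp only [h1, hS1]; push_cast; ring
    · have := h t
      simp only [cscQ] at this ⊢
      push_cast
      linear_combination t * this - t ^ (n + 1) * (t - 1) ^ 2 * hSt t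

/-- The rescaled polynomial, with `M = A l^∞` and `N = l⁰ (d + 1)`. -/
def cscF (d : ℕ) (M N p q t : ℝ) : ℝ :=
  M * t * cscG d t + N * (p * cscP (d + 1) t + q * cscQ (d + 1) t)

lemma continuous_cscG (d : ℕ) : Continuous (cscG d) := by
  unfold cscG; fun_prop

lemma continuous_cscF (d : ℕ) (M N p q : ℝ) : Continuous (cscF d M N p q) := by
  unfold cscF cscG cscP cscQ; fun_prop

lemma cscF_one (d : ℕ) (M N p q : ℝ) : cscF d M N p q 1 = 0 := by
  simp only [cscF, cscG, cscP, cscQ, one_pow]; ring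

/-- Dividing by `(t - 1) ^ 3` leaves a continuous function which is positive at `1`. -/
lemma cscF_neg_near_one (d : ℕ) (M N p q : ℝ) (hN : 0 < N) (hpq : q < p) (t0 : ℝ) (ht0 : t0 < 1) :
    ∃ t, t0 < t ∧ t < 1 ∧ cscF d M N p q t < 0 := by
  obtain ⟨W, hW, hW1, hWt⟩ := cscG_factor d
  obtain ⟨X, hX, hX1, hXt⟩ := cscP_factor (d + 1)
  obtain ⟨Y, hY, hY1, hYt⟩ := cscQ_factor (d + 1)
  let R : ℝ → ℝ := fun t => M * t * W t + N * (p * X t + q * Y t)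
  have hR : Continuous R := by fun_prop
  have hR1 : 0 < R 1 := by
    have : R 1 = N * (p - q) * (((d : ℝ) + 1) * ((d : ℝ) + 2) / 2) := by
      simp only [R, hW1, hX1, hY1]; push_cast; ring
    rw [this]
    have := sub_pos.mpr hpq
    positivity
  have hev : ∀ᶠ t in nhdsWithin (1 : ℝ) (Set.Iio 1), 0 < R t :=
    (hR.continuousAt.eventually (lt_mem_nhds hR1)).filter_mono nhdsWithin_le_nhds
  obtain ⟨t, hRt, ht⟩ := (hev.and (Ioo_mem_nhdsLT ht0)).exists
  refine ⟨t, ht.1, ht.2, ?_⟩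
  have hF : cscF d M N p q t = (t - 1) ^ 3 * R t := by
    simp only [cscF, hWt, hXt, hYt, R]; ring
  rw [hF]
  exact mul_neg_of_neg_of_pos (Odd.pow_neg (by decide) (sub_neg.mpr ht.2)) hRt

/-- For the CSC polynomial `f` of the `S³_w` join (viewed as a function of the parameter
`l^∞`) over a base of complex dimension `d` with positive normalized scalar curvature
`A > 0`, there exists `L` such that for every `l^∞ ≥ L`, `f` has at least three distinct
roots in `(0, ∞)`. -/
theorem stmt_13 (d : ℕ) (hd : 1 ≤ d) (w0 winf : ℕ) (hw0 : 0 < w0) (hwinf : 0 < winf)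
    (hlt : winf < w0) (hcop : Nat.gcd w0 winf = 1)
    (l0 : ℕ) (hl0 : 0 < l0) (A : ℝ) (hA : 0 < A)
    (f : ℕ → ℝ → ℝ)
    (hf : ∀ (linf : ℕ) (b : ℝ), f linf b =
      (w0 : ℝ) ^ (2 * (d + 1)) * b ^ (2 * d + 3) *
        (A * (linf : ℝ) + (l0 : ℝ) * ((d : ℝ) + 1) * (winf : ℝ) -
          b * ((d : ℝ) + 1) * (l0 : ℝ) * (w0 : ℝ))
      - (w0 : ℝ) ^ (d + 2) * (winf : ℝ) ^ d * b ^ (d + 3) * ((d : ℝ) + 1) *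
        (A * ((d : ℝ) + 1) * (linf : ℝ) -
          (l0 : ℝ) * (((d : ℝ) + 1) * (w0 : ℝ) + ((d : ℝ) + 2) * (winf : ℝ)))
      + (w0 : ℝ) ^ (d + 1) * (winf : ℝ) ^ (d + 1) * b ^ (d + 2) *
        (2 * A * (d : ℝ) * ((d : ℝ) + 2) * (linf : ℝ) -
          ((d : ℝ) + 1) * (2 * (d : ℝ) + 3) * (l0 : ℝ) * ((w0 : ℝ) + (winf : ℝ)))
      - (w0 : ℝ) ^ d * (winf : ℝ) ^ (d + 2) * b ^ (d + 1) * ((d : ℝ) + 1) *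
        (A * ((d : ℝ) + 1) * (linf : ℝ) -
          (l0 : ℝ) * (((d : ℝ) + 2) * (w0 : ℝ) + ((d : ℝ) + 1) * (winf : ℝ)))
      + (winf : ℝ) ^ (2 * (d + 1)) *
        (b * (A * (linf : ℝ) + (l0 : ℝ) * ((d : ℝ) + 1) * (w0 : ℝ)) -
          ((d : ℝ) + 1) * (l0 : ℝ) * (winf : ℝ))) :
    ∃ L : ℕ, 0 < L ∧ ∀ linf : ℕ, L ≤ linf →
      ∃ b1 b2 b3 : ℝ, b1 ≠ b2 ∧ b1 ≠ b3 ∧ b2 ≠ b3 ∧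
        (0 < b1 ∧ f linf b1 = 0) ∧ (0 < b2 ∧ f linf b2 = 0) ∧ (0 < b3 ∧ f linf b3 = 0) := by
  have hp : (0 : ℝ) < w0 := by exact_mod_cast hw0
  have hq : (0 : ℝ) < winf := by exact_mod_cast hwinf
  have hpq : (winf : ℝ) < w0 := by exact_mod_cast hlt
  have hl : (0 : ℝ) < l0 := by exact_mod_cast hl0
  set p : ℝ := (w0 : ℝ)
  set q : ℝ := (winf : ℝ)
  have hN : 0 < (l0 : ℝ) * ((d : ℝ) + 1) := by positivity
  set u : ℝ := q / p with hu
  have hu0 : 0 < u := by positivity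
  have hqu : q = p * u := by rw [hu]; field_simp
  have key : ∀ (m : ℕ) (t : ℝ), f m (u * t) = p ^ (2 * d + 2) * u ^ (2 * d + 3) *
      cscF d (A * m) (l0 * ((d : ℝ) + 1)) p q t := by
    intro m t
    rw [hf, hqu]
    simp only [cscF, cscG, cscP, cscQ]
    push_cast
    ring
  -- The argument `t₀`, independent of `l^∞`.
  obtain ⟨t0, hG0, ht0, ht1⟩ : ∃ t0, 0 < cscG d t0 ∧ 0 < t0 ∧ t0 < 1 := by
    have h0 : 0 < cscG d 0 := by
      have : d ≠ 0 := by omega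
      simp [cscG, this]
    have hev : ∀ᶠ t in nhdsWithin (0 : ℝ) (Set.Ioi 0), 0 < cscG d t :=
      ((continuous_cscG d).continuousAt.eventually (lt_mem_nhds h0)).filter_mono
        nhdsWithin_le_nhds
    obtain ⟨t, h, ht⟩ := (hev.and (Ioo_mem_nhdsGT one_pos)).exists
    exact ⟨t, h, ht.1, ht.2⟩
  have hc : 0 < A * t0 * cscG d t0 := by positivity
  obtain ⟨L, hL⟩ := exists_nat_gt
    (-(l0 * ((d : ℝ) + 1) * (p * cscP (d + 1) t0 + q * cscQ (d + 1) t0)) / (A * t0 * cscG d t0))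
  rw [div_lt_iff₀ hc] at hL
  refine ⟨L + 1, Nat.succ_pos _, fun m hm => ?_⟩
  have hmL : (L : ℝ) ≤ m := by exact_mod_cast (by omega : L ≤ m)
  set F := cscF d (A * m) (l0 * ((d : ℝ) + 1)) p q with hF
  have hFc : Continuous F := continuous_cscF _ _ _ _ _
  have hF0 : F 0 < 0 := by
    have : F 0 = -(l0 * ((d : ℝ) + 1) * p) := by
      simp [hF, cscF, cscP, cscQ]
    rw [this]
    exact neg_neg_of_pos (by positivity)
  have hFt0 : 0 < F t0 := by
    have := mul_le_mul_of_nonneg_right hmL hc.le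
    simp only [hF, cscF]
    linarith
  obtain ⟨t2, ht02, ht21, hFt2⟩ :=
    cscF_neg_near_one d (A * m) (l0 * ((d : ℝ) + 1)) p q hN hpq t0 ht1
  obtain ⟨x, hx, hFx⟩ := intermediate_value_Ioo ht0.le hFc.continuousOn ⟨hF0, hFt0⟩
  obtain ⟨y, hy, hFy⟩ := intermediate_value_Ioo' ht02.le hFc.continuousOn ⟨hFt2, hFt0⟩
  have hxy : x < y := hx.2.trans hy.1
  have hy1 : y < 1 := hy.2.trans ht21
  have root : ∀ t, F t = 0 → f m (u * t) = 0 := fun t h => by rw [key, ← hF, h, mul_zero]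
  refine ⟨u * x, u * y, u * 1, (mul_lt_mul_of_pos_left hxy hu0).ne,
    (mul_lt_mul_of_pos_left (hxy.trans hy1) hu0).ne, (mul_lt_mul_of_pos_left hy1 hu0).ne,
    ⟨mul_pos hu0 hx.1, root x hFx⟩, ⟨mul_pos hu0 (ht0.trans hy.1), root y hFy⟩,
    ⟨mul_pos hu0 one_pos, root 1 (cscF_one _ _ _ _ _)⟩⟩
end

section
/- Let d ≥ 1 be an integer. The function κ defined for k > 1 by κ(k) = (Σ_{j=0}^{d} (d+1-j)·k^j) / (Σ_{j=0}^{d} (j+1)·k^j) is injective on the interval (1, ∞). -/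
/-!
Write `S(k) = ∑ k^j` and `T(k) = ∑ j k^j` over `0 ≤ j ≤ d`. The numerator of `κ` is
`(d + 1) S - T` and the denominator is `S + T`, so `κ` is a strictly decreasing function of `T / S`,
the mean of `j` under the weights `k^j`. This mean is strictly increasing for `k > 0`
(`sum_mul_sum_lt`), hence `κ` is strictly decreasing.
-/

/-- The mean of `j` under the weights `k^j`, `0 ≤ j ≤ d`, is strictly increasing in `k > 0`
(stated with denominators cleared). By induction on `d`: passing from `n` to `n + 1` changes the
difference of the two sides by `∑_{i ≤ n} (n + 1 - i) (y^(n+1) x^i - x^(n+1) y^i) ≥ 0`. -/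
lemma sum_mul_sum_lt {x y : ℝ} (hx : 0 < x) (hxy : x < y) (d : ℕ) (hd : 1 ≤ d) :
    (∑ j ∈ Finset.range (d + 1), (j : ℝ) * x ^ j) * (∑ j ∈ Finset.range (d + 1), y ^ j) <
      (∑ j ∈ Finset.range (d + 1), (j : ℝ) * y ^ j) * (∑ j ∈ Finset.range (d + 1), x ^ j) := by
  induction d, hd using Nat.le_induction with
  | base =>
    simp only [Finset.sum_range_succ, Finset.sum_range_zero]
    norm_num
    linarith
  | succ n hn ih =>
    have key : 0 ≤ ∑ i ∈ Finset.range (n + 1),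
        (((n + 1 : ℕ) : ℝ) - i) * (y ^ (n + 1) * x ^ i - x ^ (n + 1) * y ^ i) := by
      refine Finset.sum_nonneg fun i hi => ?_
      obtain ⟨m, hm⟩ := Nat.exists_eq_add_of_le (Finset.mem_range.mp hi).le
      have hpow : x ^ m ≤ y ^ m := pow_le_pow_left₀ hx.le hxy.le m
      have hy : 0 < y := hx.trans hxy
      have hfac : y ^ (n + 1) * x ^ i - x ^ (n + 1) * y ^ i
          = x ^ i * y ^ i * (y ^ m - x ^ m) := by
        rw [hm, pow_add, pow_add]; ring
      rw [hfac, hm]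
      push_cast
      have := sub_nonneg.mpr hpow
      rw [add_sub_cancel_left]
      positivity
    have hexp : ∑ i ∈ Finset.range (n + 1),
        (((n + 1 : ℕ) : ℝ) - i) * (y ^ (n + 1) * x ^ i - x ^ (n + 1) * y ^ i)
        = ((n + 1 : ℕ) : ℝ) * y ^ (n + 1) * (∑ i ∈ Finset.range (n + 1), x ^ i)
          - ((n + 1 : ℕ) : ℝ) * x ^ (n + 1) * (∑ i ∈ Finset.range (n + 1), y ^ i)
          - y ^ (n + 1) * (∑ i ∈ Finset.range (n + 1), (i : ℝ) * x ^ i)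
          + x ^ (n + 1) * (∑ i ∈ Finset.range (n + 1), (i : ℝ) * y ^ i) := by
      simp only [Finset.mul_sum, ← Finset.sum_sub_distrib, ← Finset.sum_add_distrib]
      exact Finset.sum_congr rfl fun i _ => by ring
    rw [hexp] at key
    simp only [Finset.sum_range_succ _ (n + 1)]
    linarith

/-- For `d ≥ 1`, the map `κ(k) = (Σ_{j=0}^{d} (d+1-j)·k^j)/(Σ_{j=0}^{d} (j+1)·k^j)`
is injective on `(1, ∞)`. -/
theorem stmt_14 (d : ℕ) (hd : 1 ≤ d)
    (κ : ℝ → ℝ)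
    (hκ : ∀ k : ℝ, κ k = (∑ j ∈ Finset.range (d + 1), ((d : ℝ) + 1 - (j : ℝ)) * k ^ j) /
      (∑ j ∈ Finset.range (d + 1), ((j : ℝ) + 1) * k ^ j)) :
    Set.InjOn κ (Set.Ioi (1 : ℝ)) := by
  refine StrictAntiOn.injOn fun x hx y hy hxy => ?_
  have hx0 : (0 : ℝ) < x := one_pos.trans hx
  have hy0 : (0 : ℝ) < y := one_pos.trans hy
  have hden : ∀ k : ℝ, 0 < k → 0 < ∑ j ∈ Finset.range (d + 1), ((j : ℝ) + 1) * k ^ j :=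
    fun k hk => Finset.sum_pos (fun j _ => by positivity) ⟨0, by simp⟩
  have hlt := mul_lt_mul_of_pos_left (sum_mul_sum_lt hx0 hxy d hd)
    (by positivity : (0 : ℝ) < d + 2)
  rw [hκ, hκ, div_lt_div_iff₀ (hden y hy0) (hden x hx0)]
  simp only [sub_mul _ _ (_ ^ _), add_mul _ (1 : ℝ) (_ ^ _), one_mul,
    Finset.sum_sub_distrib, Finset.sum_add_distrib, ← Finset.mul_sum]
  linarith
end
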